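/- Let Z be a nonnegative real-valued random variable with E[Z] = 1 that satisfies the distributional fixed-point equation Z =_d U·(Z_1 + Z_2), where U is Uniform[0,1], Z_1 and Z_2 are copies of Z, and U, Z_1, Z_2 are mutually independent. Then Z is distributed as a rate-1 exponential random variable. -/

import Mathlib

open MeasureTheory

/-- The rate-1 exponential distribution: density `e^{-z}` on `(0, ∞)`. -/
noncomputable def expMeasure : Measure ℝ :=
  ((volume : Measure ℝ).restrict (Set.Ioi 0)).withDensity fun z =>
    ENNReal.ofReal (Real.exp (-z))

lemma fp_ode (φ : ℝ → ℂ) (hc : Continuous φ) (h1 : ∀ t, ‖φ t - 1‖ ≤ |t|)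
    (hd : HasDerivAt φ Complex.I 0) (h0 : φ 0 = 1)
    (hf : ∀ t : ℝ, φ t = ∫ u in (0:ℝ)..1, φ (u * t) ^ 2) (t : ℝ) (ht : 0 < t) :
    φ t * (1 - t * Complex.I) = 1 := by
  have hφ : ∀ x : ℝ, 0 < x → HasDerivAt φ ((φ x ^ 2 - φ x) / x) x := by
    intro x hx
    have hxc : (x : ℂ) ≠ 0 := by exact_mod_cast hx.ne'
    have key : ∀ y : ℝ, (y : ℂ) * φ y = ∫ u in (0:ℝ)..y, φ u ^ 2 := by
      intro y
      have := intervalIntegral.smul_integral_comp_mul_right (a := 0) (b := 1) (fun u => φ u ^ 2) y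
      rw [hf y]
      simpa using this
    have hc2 : Continuous (fun u => φ u ^ 2) := hc.pow 2
    have h2 : HasDerivAt (fun y => ∫ u in (0:ℝ)..y, φ u ^ 2) (φ x ^ 2) x :=
      intervalIntegral.integral_hasDerivAt_right (hc2.intervalIntegrable _ _)
        (hc2.stronglyMeasurableAtFilter _ _) hc2.continuousAt
    have h3 : HasDerivAt (fun y : ℝ => (y : ℂ)) 1 x := Complex.ofRealCLM.hasDerivAt
    have h4 := h2.div h3 hxc
    have h5 : HasDerivAt φ _ x := h4.congr_of_eventuallyEq (by
      filter_upwards [lt_mem_nhds hx] with y hy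
      have : (y : ℂ) ≠ 0 := by exact_mod_cast hy.ne'
      simp only [Pi.div_apply]
      rw [← key y]; field_simp)
    convert h5 using 1
    rw [← key x]; field_simp
  set k : ℝ → ℂ := fun x => (φ x * (1 - x * Complex.I) - 1) / x with hk
  have hk' : ∀ x : ℝ, 0 < x → HasDerivAt k ((φ x - 1) / x * k x) x := by
    intro x hx
    have hxc : (x : ℂ) ≠ 0 := by exact_mod_cast hx.ne'
    have h3 : HasDerivAt (fun y : ℝ => (y : ℂ)) 1 x := Complex.ofRealCLM.hasDerivAt
    have := (((hφ x hx).mul ((h3.mul_const Complex.I).const_sub 1)).sub_const 1).div h3 hxc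
    refine this.congr_deriv ?_
    simp only [hk, Pi.mul_apply]
    field_simp
    ring
  have hlim : Filter.Tendsto k (nhdsWithin 0 (Set.Ioi 0)) (nhds 0) := by
    have h3 : HasDerivAt (fun y : ℝ => (y : ℂ)) 1 0 := Complex.ofRealCLM.hasDerivAt
    have h4 := ((hd.mul ((h3.mul_const Complex.I).const_sub 1)).sub_const 1)
    have h5 := (hasDerivAt_iff_tendsto_slope.1 h4).mono_left
      (nhdsWithin_mono _ (fun x (hx : 0 < x) => hx.ne'))
    simp only [h0] at h5
    have h6 : Complex.I * (1 - ((0:ℝ):ℂ) * Complex.I) + 1 * -(1 * Complex.I) = 0 := by simp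
    rw [h6] at h5
    refine h5.congr fun x => ?_
    simp [slope_def_module, hk, h0, div_eq_inv_mul]
  have hb : ∀ e ∈ Set.Ioo 0 t, ‖k t‖ ≤ ‖k e‖ * Real.exp t := by
    intro e he
    have := norm_le_gronwallBound_of_norm_deriv_right_le (f := k)
      (f' := fun x => (φ x - 1) / x * k x) (δ := ‖k e‖) (K := 1) (ε := 0) (a := e) (b := t)
      (fun x hx => (hk' x (he.1.trans_le hx.1)).continuousAt.continuousWithinAt)
      (fun x hx => (hk' x (he.1.trans_le hx.1)).hasDerivWithinAt) le_rfl
      (fun x hx => by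
        have hx0 : 0 < x := he.1.trans_le hx.1
        rw [norm_mul, add_zero, norm_div, Complex.norm_real, Real.norm_eq_abs]
        gcongr
        exact div_le_one_of_le₀ (h1 x) (abs_nonneg _)) t ⟨he.2.le, le_rfl⟩
    rw [gronwallBound_ε0] at this
    refine this.trans ?_
    gcongr
    linarith [he.1]
  have hk0 : ‖k t‖ ≤ 0 := by
    refine ge_of_tendsto (x := nhdsWithin 0 (Set.Ioi 0)) (f := fun e => ‖k e‖ * Real.exp t) ?_ ?_
    · simpa using hlim.norm.mul_const (Real.exp t)
    · filter_upwards [Ioo_mem_nhdsGT ht] with e he using hb e he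
  have hk1 : k t = 0 := by simpa using hk0
  have htc : (t : ℂ) ≠ 0 := by exact_mod_cast ht.ne'
  simp only [hk, div_eq_zero_iff, htc, or_false] at hk1
  exact sub_eq_zero.1 hk1

instance fp_finite : IsFiniteMeasure expMeasure := by
  constructor
  rw [expMeasure, withDensity_apply _ MeasurableSet.univ, Measure.restrict_univ,
    ← ofReal_integral_eq_lintegral_ofReal (integrableOn_exp_neg_Ioi 0)
      (Filter.Eventually.of_forall fun x => (Real.exp_pos _).le)]
  exact ENNReal.ofReal_lt_top

lemma fp_charFun_exp (t : ℝ) : charFun expMeasure t * (1 - t * Complex.I) = 1 := by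
  have hre : (t * Complex.I - 1 : ℂ).re < 0 := by simp
  have hne : (t * Complex.I - 1 : ℂ) ≠ 0 := fun h => by simp [h] at hre
  have : charFun expMeasure t = - 1 / (t * Complex.I - 1) := by
    rw [charFun_apply_real, expMeasure,
      integral_withDensity_eq_integral_toReal_smul (by fun_prop) (by simp)]
    have := integral_exp_mul_complex_Ioi hre 0
    simp only [Complex.ofReal_zero, mul_zero, Complex.exp_zero] at this
    rw [← this]
    congr 1 with x
    rw [ENNReal.toReal_ofReal (Real.exp_pos _).le, Complex.real_smul, Complex.ofReal_exp,
      ← Complex.exp_add]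
    congr 1
    push_cast
    ring
  rw [this, show (1 - t * Complex.I : ℂ) = -(t * Complex.I - 1) by ring]
  field_simp

/-- If `Z ≥ 0` has mean 1 and satisfies the distributional fixed-point equation
`Z =_d U · (Z₁ + Z₂)`, where `U` is Uniform[0,1], `Z₁, Z₂` are copies of `Z`, and
`U, Z₁, Z₂` are mutually independent, then `Z` is a rate-1 exponential. -/
theorem fixedPoint_is_exponential {Ω : Type*} [MeasurableSpace Ω] (μ : Measure Ω)
    [IsProbabilityMeasure μ] (Z U Z₁ Z₂ : Ω → ℝ)
    (hZ : Measurable Z) (hU : Measurable U) (hZ₁ : Measurable Z₁) (hZ₂ : Measurable Z₂)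
    (hnonneg : ∀ ω, 0 ≤ Z ω)
    (hmean : ∫ ω, Z ω ∂μ = 1)
    (hUdist : Measure.map U μ = (volume : Measure ℝ).restrict (Set.Icc 0 1))
    (hZ₁dist : Measure.map Z₁ μ = Measure.map Z μ)
    (hZ₂dist : Measure.map Z₂ μ = Measure.map Z μ)
    (hindep : ProbabilityTheory.iIndepFun ![U, Z₁, Z₂] μ)
    (hfix : Measure.map Z μ = Measure.map (fun ω => U ω * (Z₁ ω + Z₂ ω)) μ) :
    Measure.map Z μ = expMeasure := by
  have hint : Integrable Z μ := integrable_of_integral_eq_one hmean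
  set ν := Measure.map Z μ with hν
  have : IsProbabilityMeasure ν := Measure.isProbabilityMeasure_map hZ.aemeasurable
  have hmeas : ∀ i, Measurable (![U, Z₁, Z₂] i) := by
    intro i; fin_cases i <;> simpa
  have hI1 : ProbabilityTheory.IndepFun U (Z₁ + Z₂) μ :=
    hindep.indepFun_add_right hmeas 0 1 2 (by decide) (by decide)
  have hI2 : ProbabilityTheory.IndepFun Z₁ Z₂ μ :=
    hindep.indepFun (i := 1) (j := 2) (by decide)
  have hS : Measurable (Z₁ + Z₂) := hZ₁.add hZ₂
  have hρ : ∀ t, charFun (Measure.map (Z₁ + Z₂) μ) t = charFun ν t ^ 2 := by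
    intro t
    rw [hI2.charFun_map_add_eq_mul hZ₁.aemeasurable hZ₂.aemeasurable, hZ₁dist, hZ₂dist,
      Pi.mul_apply, sq]
  have hρp : IsProbabilityMeasure (Measure.map (Z₁ + Z₂) μ) :=
    Measure.isProbabilityMeasure_map hS.aemeasurable
  have hUp : IsProbabilityMeasure (Measure.map U μ) :=
    Measure.isProbabilityMeasure_map hU.aemeasurable
  have hf : ∀ t : ℝ, charFun ν t = ∫ u in (0:ℝ)..1, charFun ν (u * t) ^ 2 := by
    intro t
    have e1 : ν = Measure.map (fun p : ℝ × ℝ => p.1 * p.2)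
        ((Measure.map U μ).prod (Measure.map (Z₁ + Z₂) μ)) := by
      rw [← hI1.map_prod_eq_prod_map_map hU.aemeasurable hS.aemeasurable,
        Measure.map_map (by fun_prop) (by fun_prop), hfix]
      rfl
    rw [e1, charFun_apply_real, integral_map (by fun_prop) (by fun_prop), integral_prod]
    · rw [← e1, hUdist, integral_Icc_eq_integral_Ioc,
        ← intervalIntegral.integral_of_le zero_le_one]
      congr 1 with u
      rw [← hρ, charFun_apply_real]
      congr 1 with x
      push_cast
      ring_nf
    · refine Integrable.of_bound (by fun_prop) 1 (Filter.Eventually.of_forall fun p => ?_)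
      have := Complex.norm_exp_ofReal_mul_I (t * (p.1 * p.2))
      push_cast at this ⊢
      exact this.le
  have hid : Integrable id ν := by
    rw [hν, integrable_map_measure (by fun_prop) hZ.aemeasurable]
    exact hint
  have hmem : MemLp id ((1 : ℕ) : ENNReal) ν := by
    simpa using memLp_one_iff_integrable.2 hid
  have hνmean : ∫ x, x ∂ν = 1 := by
    rw [hν, integral_map hZ.aemeasurable (by fun_prop), hmean]
  have hd : HasDerivAt (charFun ν) Complex.I 0 := by
    have h1 : DifferentiableAt ℝ (charFun ν) 0 :=
      ((contDiff_charFun hmem).differentiable (by simp)) 0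
    have h2 := iteratedDeriv_charFun_zero hmem
    rw [iteratedDeriv_one] at h2
    have h3 : deriv (charFun ν) 0 = Complex.I := by
      rw [h2]
      simp [hνmean]
    exact h1.hasDerivAt.congr_deriv h3
  have h1 : ∀ t, ‖charFun ν t - 1‖ ≤ |t| := by
    intro t
    have hi : Integrable (fun x : ℝ => Complex.exp (t * x * Complex.I)) ν := by
      refine Integrable.of_bound (by fun_prop) 1 (Filter.Eventually.of_forall fun p => ?_)
      have := Complex.norm_exp_ofReal_mul_I (t * p)
      push_cast at this ⊢
      exact this.le
    have e : charFun ν t - 1 = ∫ x : ℝ, (Complex.exp (t * x * Complex.I) - 1) ∂ν := by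
      rw [integral_sub hi (integrable_const _), charFun_apply_real]; simp
    have hnn : ∀ᵐ x ∂ν, 0 ≤ x := by
      rw [hν, ae_map_iff hZ.aemeasurable measurableSet_Ici]
      exact Filter.Eventually.of_forall hnonneg
    rw [e]
    calc _ ≤ ∫ x, |t| * x ∂ν := by
          refine norm_integral_le_of_norm_le (hid.const_mul _) ?_
          filter_upwards [hnn] with x hx
          have := Real.norm_exp_I_mul_ofReal_sub_one_le (x := t * x)
          rw [Real.norm_eq_abs, abs_mul, abs_of_nonneg hx] at this
          rwa [Complex.ofReal_mul, mul_comm Complex.I] at this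
      _ = |t| := by rw [integral_const_mul, hνmean, mul_one]
  have hpos : ∀ t : ℝ, 0 < t → charFun ν t * (1 - t * Complex.I) = 1 :=
    fp_ode (charFun ν) continuous_charFun h1 hd (by simp) hf
  have hpos' : ∀ t : ℝ, 0 < t → charFun ν t = charFun expMeasure t := by
    intro t ht
    have a := hpos t ht
    have b := fp_charFun_exp t
    have hne : (1 - t * Complex.I : ℂ) ≠ 0 := right_ne_zero_of_mul_eq_one a
    exact mul_right_cancel₀ hne (a.trans b.symm)
  apply Measure.ext_of_charFun
  ext t
  rcases lt_trichotomy t 0 with h | h | h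
  · have := hpos' (-t) (by linarith)
    rw [charFun_neg, charFun_neg] at this
    exact (starRingEnd ℂ).injective this
  · subst h
    have := fp_charFun_exp 0
    simp at this ⊢
    simp [this]
  · exact hpos' t h
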